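/- Let E be a real Banach space satisfying Opial's condition, C a nonempty closed convex subset of E, and T an (α,β,γ,δ)-symmetric generalized hybrid self-mapping of C satisfying α+2β+γ ≥ 0, α+β > 0, β ≤ 0 and δ ≥ 0. Then I − T is demiclosed at 0: if a sequence {xₙ} in C converges weakly to u ∈ C and ‖xₙ − Txₙ‖ → 0, then Tu = u. -/

import Mathlib

open Filter Topology

/-!
If `‖xₙ - T xₙ‖ → 0` along a bounded sequence, then `T xₙ` may be replaced by `xₙ` in the squared
distances of the hybrid inequality at `(xₙ, u)`, up to a null sequence. What remains is
`(α + β) ‖xₙ - T u‖² ≤ (α + β) ‖xₙ - u‖² + o(1)`, hence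
`liminf ‖xₙ - T u‖ ≤ liminf ‖xₙ - u‖`. For a weak limit `u` (whose sequence is bounded by
Banach–Steinhaus), Opial's condition allows this only when `T u = u`.
-/

section WeakBoundedness

variable {𝕜 E : Type*} [RCLike 𝕜] [NormedAddCommGroup E] [NormedSpace 𝕜 E]

theorem exists_norm_le_of_forall_dual_bounded {ι : Type*} {x : ι → E}
    (hx : ∀ f : StrongDual 𝕜 E, ∃ K, ∀ i, ‖f (x i)‖ ≤ K) : ∃ M, ∀ i, ‖x i‖ ≤ M := by
  obtain ⟨M, hM⟩ := banach_steinhaus (g := fun i => NormedSpace.inclusionInDoubleDualLi 𝕜 (x i)) hx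
  exact ⟨M, by simpa only [LinearIsometry.norm_map] using hM⟩

theorem exists_norm_le_of_forall_dual_tendsto {x : ℕ → E} {u : E}
    (hx : ∀ f : StrongDual 𝕜 E, Tendsto (fun n => f (x n)) atTop (𝓝 (f u))) :
    ∃ M, ∀ n, ‖x n‖ ≤ M :=
  exists_norm_le_of_forall_dual_bounded fun f =>
    (hx f).norm.bddAbove_range.imp fun _ hK n => hK ⟨n, rfl⟩

end WeakBoundedness

section NullPerturbation

variable {ι : Type*} {l : Filter ι}

theorem tendsto_sq_sub_sq_zero {R : Type*} [SeminormedCommRing R] {a b : ι → R}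
    (hab : Tendsto (fun i => a i - b i) l (𝓝 0))
    (hb : IsBoundedUnder (· ≤ ·) l fun i => ‖b i‖) :
    Tendsto (fun i => a i ^ 2 - b i ^ 2) l (𝓝 0) := by
  have hcross : Tendsto (fun i => (a i - b i) * b i) l (𝓝 0) := hab.zero_mul_isBoundedUnder_le hb
  convert (hab.pow 2).add (hcross.const_mul 2) using 2 <;> ring

theorem isBoundedUnder_norm_sub_const {E : Type*} [SeminormedAddCommGroup E] {x : ι → E}
    (hx : IsBoundedUnder (· ≤ ·) l fun i => ‖x i‖) (w : E) :
    IsBoundedUnder (· ≤ ·) l fun i => ‖x i - w‖ :=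
  (isBoundedUnder_le_add hx (isBoundedUnder_const (a := ‖w‖))).mono_le
    (.of_forall fun _ => norm_sub_le _ _)

theorem tendsto_norm_sub_sq_sub_norm_sub_sq_zero {E : Type*} [SeminormedAddCommGroup E]
    {x y : ι → E} (hx : IsBoundedUnder (· ≤ ·) l fun i => ‖x i‖)
    (hxy : Tendsto (fun i => ‖x i - y i‖) l (𝓝 0)) (w : E) :
    Tendsto (fun i => ‖y i - w‖ ^ 2 - ‖x i - w‖ ^ 2) l (𝓝 0) := by
  refine tendsto_sq_sub_sq_zero (squeeze_zero_norm (fun i => ?_) hxy) ?_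
  · simpa only [Real.norm_eq_abs, sub_sub_sub_cancel_right, norm_sub_rev (y i) (x i)] using
      abs_norm_sub_norm_le (y i - w) (x i - w)
  · simpa only [norm_norm] using isBoundedUnder_norm_sub_const hx w

theorem liminf_le_liminf_of_le_add_tendsto_zero [l.NeBot] {a b c : ι → ℝ}
    (ha : IsBoundedUnder (· ≥ ·) l a) (hb : IsBoundedUnder (· ≤ ·) l b)
    (hb' : IsBoundedUnder (· ≥ ·) l b) (hc : Tendsto c l (𝓝 0)) (h : ∀ᶠ i in l, a i ≤ b i + c i) :
    liminf a l ≤ liminf b l :=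
  calc
    liminf a l ≤ liminf (c + b) l :=
      liminf_le_liminf (h.mono fun i hi => by simpa only [Pi.add_apply, add_comm] using hi) ha
        (isBoundedUnder_le_add hc.isBoundedUnder_le hb).isCoboundedUnder_ge
    _ ≤ limsup c l + liminf b l :=
      liminf_add_le hc.isBoundedUnder_ge hc.isBoundedUnder_le hb' hb.isCoboundedUnder_ge
    _ = liminf b l := by rw [hc.limsup_eq, zero_add]

theorem liminf_le_liminf_of_sq_le_sq_add_tendsto_zero [l.NeBot] {a b c : ι → ℝ}
    (ha : ∀ i, 0 ≤ a i) (hb : ∀ i, 0 ≤ b i) (hbM : IsBoundedUnder (· ≤ ·) l b)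
    (hc : Tendsto c l (𝓝 0)) (h : ∀ᶠ i in l, a i ^ 2 ≤ b i ^ 2 + c i) :
    liminf a l ≤ liminf b l := by
  have hsqrt : Tendsto (fun i => √|c i|) l (𝓝 0) := by simpa using hc.abs.sqrt
  refine liminf_le_liminf_of_le_add_tendsto_zero (isBoundedUnder_of ⟨0, ha⟩) hbM
    (isBoundedUnder_of ⟨0, hb⟩) hsqrt (h.mono fun i hi => ?_)
  refine le_of_sq_le_sq ?_ (add_nonneg (hb i) (Real.sqrt_nonneg _))
  calc
    a i ^ 2 ≤ b i ^ 2 + |c i| := hi.trans (by gcongr; exact le_abs_self _)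
    _ = b i ^ 2 + √|c i| ^ 2 := by rw [Real.sq_sqrt (abs_nonneg _)]
    _ ≤ (b i + √|c i|) ^ 2 := by
      nlinarith only [mul_nonneg (hb i) (Real.sqrt_nonneg |c i|)]

end NullPerturbation

/-- The `(α, β, γ, δ)`-symmetric generalized hybrid inequality for `T` at all pairs of points of
`C`. The map `T` is total on `E` and constrained only at points of `C`. -/
def SymmGenHybridOn {E : Type*} [SeminormedAddCommGroup E] (α β γ δ : ℝ) (T : E → E)
    (C : Set E) : Prop :=
  ∀ x ∈ C, ∀ y ∈ C,
    α * ‖T x - T y‖ ^ 2 + β * (‖x - T y‖ ^ 2 + ‖T x - y‖ ^ 2) + γ * ‖x - y‖ ^ 2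
      + δ * (‖x - T x‖ ^ 2 + ‖y - T y‖ ^ 2) ≤ 0

/-- Opial's condition on a real normed space, with weak convergence of sequences expressed through
the continuous linear functionals. -/
def OpialCondition (E : Type*) [NormedAddCommGroup E] [NormedSpace ℝ E] : Prop :=
  ∀ (x : ℕ → E) (u : E),
    (∀ f : StrongDual ℝ E, Tendsto (fun n => f (x n)) atTop (𝓝 (f u))) →
      ∀ v : E, v ≠ u → liminf (fun n => ‖x n - u‖) atTop < liminf (fun n => ‖x n - v‖) atTop

namespace SymmGenHybridOn

variable {E : Type*} [SeminormedAddCommGroup E] {α β γ δ : ℝ} {T : E → E} {C : Set E}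

theorem mul_norm_sub_map_sq_le (hT : SymmGenHybridOn α β γ δ T C) (hαβγ : 0 ≤ α + 2 * β + γ)
    (hδ : 0 ≤ δ) {x y : E} (hx : x ∈ C) (hy : y ∈ C) :
    (α + β) * ‖x - T y‖ ^ 2 ≤ (α + β) * ‖x - y‖ ^ 2
      - (α * (‖T x - T y‖ ^ 2 - ‖x - T y‖ ^ 2) + β * (‖T x - y‖ ^ 2 - ‖x - y‖ ^ 2)) := by
  have hγ : 0 ≤ (α + 2 * β + γ) * ‖x - y‖ ^ 2 := by positivity
  have hδ' : 0 ≤ δ * (‖x - T x‖ ^ 2 + ‖y - T y‖ ^ 2) := by positivity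
  linarith [hT x hx y hy]

theorem liminf_norm_sub_map_le (hT : SymmGenHybridOn α β γ δ T C) (hαβγ : 0 ≤ α + 2 * β + γ)
    (hαβ : 0 < α + β) (hδ : 0 ≤ δ) {ι : Type*} {l : Filter ι} [l.NeBot] {x : ι → E}
    (hxC : ∀ᶠ i in l, x i ∈ C) (hx : IsBoundedUnder (· ≤ ·) l fun i => ‖x i‖)
    (hxT : Tendsto (fun i => ‖x i - T (x i)‖) l (𝓝 0)) {y : E} (hy : y ∈ C) :
    liminf (fun i => ‖x i - T y‖) l ≤ liminf (fun i => ‖x i - y‖) l := by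
  have hnull := tendsto_norm_sub_sq_sub_norm_sub_sq_zero hx hxT
  have herror : Tendsto (fun i => -(α * (‖T (x i) - T y‖ ^ 2 - ‖x i - T y‖ ^ 2)
      + β * (‖T (x i) - y‖ ^ 2 - ‖x i - y‖ ^ 2)) / (α + β)) l (𝓝 0) := by
    simpa using ((((hnull (T y)).const_mul α).add ((hnull y).const_mul β)).neg).div_const (α + β)
  refine liminf_le_liminf_of_sq_le_sq_add_tendsto_zero (fun _ => norm_nonneg _)
    (fun _ => norm_nonneg _) (isBoundedUnder_norm_sub_const hx y) herror (hxC.mono fun i hi => ?_)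
  rw [← sub_le_iff_le_add', le_div_iff₀ hαβ]
  linarith [hT.mul_norm_sub_map_sq_le hαβγ hδ hi hy]

end SymmGenHybridOn

theorem symm_gen_hybrid_demiclosed_general
    {E : Type*} [NormedAddCommGroup E] [NormedSpace ℝ E] (hE : OpialCondition E)
    {C : Set E} {T : E → E} {α β γ δ : ℝ} (hT : SymmGenHybridOn α β γ δ T C)
    (hαβγ : 0 ≤ α + 2 * β + γ) (hαβ : 0 < α + β) (hδ : 0 ≤ δ)
    {x : ℕ → E} (hxC : ∀ᶠ n in atTop, x n ∈ C) {u : E} (hu : u ∈ C)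
    (hxu : ∀ f : StrongDual ℝ E, Tendsto (fun n => f (x n)) atTop (𝓝 (f u)))
    (hxT : Tendsto (fun n => ‖x n - T (x n)‖) atTop (𝓝 0)) :
    T u = u := by
  have hbounded : IsBoundedUnder (· ≤ ·) atTop fun n => ‖x n‖ :=
    isBoundedUnder_of (exists_norm_le_of_forall_dual_tendsto hxu)
  have hle : liminf (fun n => ‖x n - T u‖) atTop ≤ liminf (fun n => ‖x n - u‖) atTop :=
    hT.liminf_norm_sub_map_le hαβγ hαβ hδ hxC hbounded hxT hu
  by_contra hne
  exact hle.not_gt (hE x u hxu (T u) hne)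

/-- Let `E` be a real Banach space satisfying Opial's condition, `C` a nonempty
closed convex subset of `E`, and `T` an `(α,β,γ,δ)`-symmetric generalized hybrid self-mapping
of `C` with `α+2β+γ ≥ 0`, `α+β > 0`, `β ≤ 0`, `δ ≥ 0`. Then `I − T` is demiclosed at `0`:
if `{xₙ} ⊆ C` converges weakly to `u ∈ C` and `‖xₙ − Txₙ‖ → 0`, then `Tu = u`. -/
theorem symm_gen_hybrid_demiclosed
    {E : Type*} [NormedAddCommGroup E] [NormedSpace ℝ E] [CompleteSpace E]
    (hOpial : ∀ (z : ℕ → E) (u : E),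
      (∀ f : E →L[ℝ] ℝ, Tendsto (fun n => f (z n)) atTop (𝓝 (f u))) →
      ∀ v : E, v ≠ u →
        Filter.liminf (fun n => ‖z n - u‖) atTop < Filter.liminf (fun n => ‖z n - v‖) atTop)
    (C : Set E) (hCne : C.Nonempty) (hCcl : IsClosed C) (hCcv : Convex ℝ C)
    (T : E → E) (hTself : Set.MapsTo T C C)
    (α β γ δ : ℝ)
    (hhyb : ∀ x ∈ C, ∀ y ∈ C,
      α * ‖T x - T y‖ ^ 2 + β * (‖x - T y‖ ^ 2 + ‖T x - y‖ ^ 2) + γ * ‖x - y‖ ^ 2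
        + δ * (‖x - T x‖ ^ 2 + ‖y - T y‖ ^ 2) ≤ 0)
    (h1 : α + 2 * β + γ ≥ 0) (h2 : α + β > 0) (h3 : β ≤ 0) (h4 : δ ≥ 0)
    (x : ℕ → E) (hx : ∀ n, x n ∈ C) (u : E) (hu : u ∈ C)
    (hweak : ∀ f : E →L[ℝ] ℝ, Tendsto (fun n => f (x n)) atTop (𝓝 (f u)))
    (hAF : Tendsto (fun n => ‖x n - T (x n)‖) atTop (𝓝 0)) :
    T u = u := by
  exact symm_gen_hybrid_demiclosed_general hOpial hhyb h1 h2 h4 (.of_forall hx) hu hweak hAF
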